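/- Let n ≥ 6 and let c' be an integer with 1 ≤ c' ≤ n−3 such that c' is a local maximum of c ↦ r(C_n^c), i.e. r(C_n^{c'−1}) ≤ r(C_n^{c'}) and r(C_n^{c'+1}) ≤ r(C_n^{c'}). Then 2c' < n. -/

import Mathlib

/-- Partial transition function of the PFA `C_n^c`. `false` is letter `a`, `true` is letter `b`. -/
def cernyStep (c n q : ℕ) : Bool → Option ℕ
  | false =>
      if q ≤ n - c - 1 then some (q + 1)
      else if q = n then some 1 else none
  | true =>
      if q ≤ n - c - 1 then some q
      else if q = n then some 1 else some (q + 1)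

/-- Action of a word on a state (`none` if undefined at some step). -/
def cernyRun (c n : ℕ) (q : ℕ) (w : List Bool) : Option ℕ :=
  List.foldlM (cernyStep c n) q w

/-- A word is synchronizing for `C_n^c`. -/
def IsSync (c n : ℕ) (w : List Bool) : Prop :=
  ∃ qs : ℕ, ∀ q ∈ Finset.Icc 1 n, cernyRun c n q w = some qs

/-- The reset threshold of `C_n^c`: minimal length of a synchronizing word. -/
noncomputable def resetThreshold (c n : ℕ) : ℕ :=
  sInf { L : ℕ | ∃ w : List Bool, w.length = L ∧ IsSync c n w }

/-!
Put `m = n - c - 1`. Contracting the states `n - c, …, n` of `C_n^c` leaves a cycle of length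
`m + 1`; on its universal cover the tokens of a synchronizing word keep their order and merge only
with neighbours. The merges of `m` consecutive tokens form a binary tree with `m` leaves, and a
token that stands for the leaves in `[a, b]` when it merges has by then been carried through the
contracted states, at `c` letters `b` each, at least `b - a` times. No two tokens share these
letters, so the word has length at least `c * E + R + (m - 1) ^ 2`, where `E` is the external path
length of the tree and `R` its right path length. Conversely every tree with `m` leaves is realized
by a synchronizing word of length at most `c * E + R + m * (m - 1) + c + 1`.

Passing from `c` to `c + 1` with `n` fixed removes one leaf. Deleting a deepest leaf, at depth `h`,
from a tree that is optimal for `c` lowers `c * E` by `c * (h + 1)`, while the extra letter per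
climb costs the external path length `E - h - 1` of the smaller tree; as `E ≤ m * h`, the gain wins
as soon as `m ≤ c + 1`, that is, `n ≤ 2 * (c + 1)`.
-/

section Trees

variable {α : Type*}

open BinaryTree

/-- The sum over all leaves of their depth. -/
def externalPathLength : BinaryTree α → ℕ
  | .nil => 0
  | .node _ l r =>
    externalPathLength l + externalPathLength r + (l.numLeaves + r.numLeaves)

/-- The sum over all leaves of the number of right turns on the path from the root. -/
def rightPathLength : BinaryTree α → ℕ
  | .nil => 0
  | .node _ l r => rightPathLength l + rightPathLength r + r.numLeaves

theorem externalPathLength_le_numLeaves_mul_height (t : BinaryTree α) :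
    externalPathLength t ≤ t.numLeaves * t.height := by
  induction t with
  | nil => exact Nat.zero_le _
  | node _ l r ihl ihr =>
    have hl := Nat.mul_le_mul_left l.numLeaves (le_max_left l.height r.height)
    have hr := Nat.mul_le_mul_left r.numLeaves (le_max_right l.height r.height)
    simp only [externalPathLength, numLeaves, height]
    linarith

theorem exists_numNodes_eq (a : α) (k : ℕ) : ∃ t : BinaryTree α, t.numNodes = k := by
  induction k with
  | zero => exact ⟨.nil, rfl⟩
  | succ k ih =>
    obtain ⟨t, ht⟩ := ih
    exact ⟨.node a t .nil, by simp [ht]⟩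

theorem exists_remove_deepest_leaf (t : BinaryTree α) (ht : 0 < t.numNodes) :
    ∃ s : BinaryTree α, s.numNodes + 1 = t.numNodes ∧
      externalPathLength s + t.height + 1 = externalPathLength t ∧
      rightPathLength s + 1 ≤ rightPathLength t := by
  induction t with
  | nil => simp at ht
  | node a l r ihl ihr =>
    simp only [numNodes, height, externalPathLength, rightPathLength, numLeaves_eq_numNodes_succ]
    rcases le_total r.height l.height with h | h
    · rcases l with _ | ⟨b, u, v⟩
      · obtain rfl : r = .nil := by cases r with | nil => rfl | node => simp at h
        exact ⟨.nil, by simp [externalPathLength, rightPathLength]⟩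
      · obtain ⟨s, hs, hsE, hsR⟩ := ihl (by simp)
        refine ⟨.node a s r, ?_⟩
        simp only [numNodes, externalPathLength, rightPathLength, numLeaves_eq_numNodes_succ]
          at hs hsE hsR ⊢
        omega
    · rcases r with _ | ⟨b, u, v⟩
      · obtain rfl : l = .nil := by cases l with | nil => rfl | node => simp at h
        exact ⟨.nil, by simp [externalPathLength, rightPathLength]⟩
      · obtain ⟨s, hs, hsE, hsR⟩ := ihr (by simp)
        refine ⟨.node a l s, ?_⟩
        simp only [numNodes, externalPathLength, rightPathLength, numLeaves_eq_numNodes_succ]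
          at hs hsE hsR ⊢
        omega

/-- The cells occupied at the start of lap `T` of the merging schedule of `t`. Cells count from `0`
and cell `x` is the state `x + 1`. The leaves of `t` are the tokens, initially one per cell; each
subtree merges its tokens into its leftmost cell. A merged right subtree then drops one cell per lap
until it meets the left one in cell `0` (where the truncated subtraction keeps it). -/
def occupiedCells : BinaryTree α → ℕ → Finset ℕ
  | .nil, _ => {0}
  | .node _ l r, T =>
    occupiedCells l T ∪
      if T < r.numNodes then (occupiedCells r T).image (· + l.numLeaves)
      else {l.numNodes + r.numNodes + 1 - T}

/-- The occupied cells whose token keeps its place during lap `T` of the merging schedule of `t`;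
all other tokens drop by one cell. -/
def heldCells : BinaryTree α → ℕ → Finset ℕ
  | .nil, _ => {0}
  | .node _ l r, T =>
    heldCells l T ∪ if T < r.numNodes then (heldCells r T).image (· + l.numLeaves) else ∅

/-- The cell reached after one lap from cell `x` when the cells in `H` are held. -/
def dropUnlessMem (H : Finset ℕ) (x : ℕ) : ℕ :=
  if x ∈ H then x else x - 1

theorem heldCells_subset_occupiedCells (t : BinaryTree α) (T : ℕ) :
    heldCells t T ⊆ occupiedCells t T := by
  induction t with
  | nil => rfl
  | node _ l r ihl ihr =>
    refine Finset.union_subset_union ihl ?_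
    split_ifs
    · exact Finset.image_subset_image ihr
    · exact Finset.empty_subset _

theorem zero_mem_heldCells (t : BinaryTree α) (T : ℕ) : 0 ∈ heldCells t T := by
  induction t with
  | nil => exact Finset.mem_singleton_self 0
  | node _ l r ihl _ => exact Finset.mem_union_left _ ihl

theorem le_of_mem_occupiedCells {t : BinaryTree α} {T x : ℕ} (hx : x ∈ occupiedCells t T) :
    x ≤ t.numNodes - T := by
  induction t generalizing x with
  | nil => simp_all [occupiedCells]
  | node _ l r ihl ihr =>
    simp only [occupiedCells, Finset.mem_union, numNodes] at hx ⊢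
    rcases hx with hx | hx
    · have := ihl hx
      omega
    · split_ifs at hx with hT
      · obtain ⟨y, hy, rfl⟩ := Finset.mem_image.1 hx
        have := ihr hy
        have := l.numLeaves_eq_numNodes_succ
        omega
      · exact (Finset.mem_singleton.1 hx).le

theorem le_of_mem_heldCells {t : BinaryTree α} {T x : ℕ} (hx : x ∈ heldCells t T) :
    x ≤ t.numNodes - T :=
  le_of_mem_occupiedCells (heldCells_subset_occupiedCells t T hx)

theorem mem_occupiedCells_zero {t : BinaryTree α} {x : ℕ} (hx : x ≤ t.numNodes) :
    x ∈ occupiedCells t 0 := by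
  induction t generalizing x with
  | nil => simp_all [occupiedCells]
  | node _ l r ihl ihr =>
    have hl := l.numLeaves_eq_numNodes_succ
    simp only [occupiedCells, Finset.mem_union, numNodes] at hx ⊢
    by_cases hxl : x ≤ l.numNodes
    · exact Or.inl (ihl hxl)
    · right
      split_ifs with hr
      · exact Finset.mem_image.2 ⟨x - l.numLeaves, ihr (by omega), by omega⟩
      · exact Finset.mem_singleton.2 (by omega)

theorem mem_heldCells_node_iff_left {a : α} {l r : BinaryTree α} {T x : ℕ} (hx : x ≤ l.numNodes) :
    x ∈ heldCells (.node a l r) T ↔ x ∈ heldCells l T := by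
  rw [heldCells, Finset.mem_union, or_iff_left]
  split_ifs
  · rw [Finset.mem_image]
    rintro ⟨y, -, rfl⟩
    have := l.numLeaves_eq_numNodes_succ
    omega
  · exact Finset.notMem_empty x

theorem add_mem_heldCells_node_iff {a : α} {l r : BinaryTree α} {T y : ℕ} (hT : T < r.numNodes) :
    y + l.numLeaves ∈ heldCells (.node a l r) T ↔ y ∈ heldCells r T := by
  rw [heldCells, if_pos hT, Finset.mem_union, or_iff_right]
  · exact Finset.mem_image.trans ⟨fun ⟨z, hz, h⟩ ↦ Nat.add_right_cancel h ▸ hz, fun h ↦ ⟨y, h, rfl⟩⟩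
  · intro h
    have := le_of_mem_heldCells h
    have := l.numLeaves_eq_numNodes_succ
    omega

theorem dropUnlessMem_mem_occupiedCells_node_left {a : α} {l r : BinaryTree α} {T x : ℕ}
    (hx : x ∈ occupiedCells l T)
    (ih : dropUnlessMem (heldCells l T) x ∈ occupiedCells l (T + 1)) :
    dropUnlessMem (heldCells (.node a l r) T) x ∈ occupiedCells (.node a l r) (T + 1) := by
  have hxl : x ≤ l.numNodes := (le_of_mem_occupiedCells hx).trans (Nat.sub_le _ _)
  simp only [dropUnlessMem, mem_heldCells_node_iff_left hxl] at ih ⊢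
  exact Finset.mem_union_left _ ih

theorem dropUnlessMem_mem_occupiedCells_node_right {a : α} {l r : BinaryTree α} {T y : ℕ}
    (hT : T < r.numNodes)
    (ih : dropUnlessMem (heldCells r T) y ∈ occupiedCells r (T + 1)) :
    dropUnlessMem (heldCells (.node a l r) T) (y + l.numLeaves) ∈
      occupiedCells (.node a l r) (T + 1) := by
  have hshift : dropUnlessMem (heldCells (.node a l r) T) (y + l.numLeaves) =
      dropUnlessMem (heldCells r T) y + l.numLeaves := by
    simp only [dropUnlessMem, add_mem_heldCells_node_iff hT]
    split_ifs with hy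
    · rfl
    · have : y ≠ 0 := fun h ↦ hy (h ▸ zero_mem_heldCells r T)
      omega
  rw [hshift]
  refine Finset.mem_union_right _ ?_
  split_ifs with hT'
  · exact Finset.mem_image_of_mem _ ih
  · have := le_of_mem_occupiedCells ih
    have := l.numLeaves_eq_numNodes_succ
    exact Finset.mem_singleton.2 (by omega)

theorem dropUnlessMem_mem_occupiedCells_node_merged {a : α} {l r : BinaryTree α} {T : ℕ}
    (hT : r.numNodes ≤ T) :
    dropUnlessMem (heldCells (.node a l r) T) (l.numNodes + r.numNodes + 1 - T) ∈
      occupiedCells (.node a l r) (T + 1) := by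
  have hdrop : dropUnlessMem (heldCells (.node a l r) T) (l.numNodes + r.numNodes + 1 - T) =
      l.numNodes + r.numNodes + 1 - (T + 1) := by
    rw [dropUnlessMem, heldCells, if_neg hT.not_gt, Finset.union_empty]
    split_ifs with h
    · have := le_of_mem_heldCells h
      omega
    · omega
  rw [hdrop, occupiedCells, if_neg (by omega)]
  exact Finset.mem_union_right _ (Finset.mem_singleton_self _)

theorem dropUnlessMem_mem_occupiedCells {t : BinaryTree α} {T x : ℕ}
    (hx : x ∈ occupiedCells t T) :
    dropUnlessMem (heldCells t T) x ∈ occupiedCells t (T + 1) := by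
  induction t generalizing x with
  | nil => simp_all [dropUnlessMem, occupiedCells]
  | node _ l r ihl ihr =>
    rw [occupiedCells, Finset.mem_union] at hx
    rcases hx with hx | hx
    · exact dropUnlessMem_mem_occupiedCells_node_left hx (ihl hx)
    · split_ifs at hx with hT
      · obtain ⟨y, hy, rfl⟩ := Finset.mem_image.1 hx
        exact dropUnlessMem_mem_occupiedCells_node_right hT (ihr hy)
      · rw [Finset.mem_singleton.1 hx]
        exact dropUnlessMem_mem_occupiedCells_node_merged (not_lt.1 hT)

theorem sum_range_add_le {f : ℕ → ℕ} {s d a k : ℕ} (ha : ∑ T ∈ Finset.range s, f T ≤ a)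
    (hk : ∀ T, s ≤ T → f T ≤ k) : ∑ T ∈ Finset.range (s + d), f T ≤ a + d * k := by
  rw [Finset.sum_range_add]
  refine Nat.add_le_add ha ?_
  simpa using Finset.sum_le_card_nsmul (Finset.range d) _ k fun T _ ↦ hk (s + T) le_self_add

theorem sum_range_card_union_le {β : Type*} [DecidableEq β] {A B : ℕ → Finset β} {p q a b j k : ℕ}
    (hA : ∑ T ∈ Finset.range p, (A T).card ≤ a) (hAj : ∀ T, p ≤ T → (A T).card ≤ j)
    (hB : ∑ T ∈ Finset.range q, (B T).card ≤ b) (hBk : ∀ T, q ≤ T → (B T).card ≤ k) :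
    ∑ T ∈ Finset.range (p + q + 1), (A T ∪ B T).card ≤ a + (q + 1) * j + (b + (p + 1) * k) :=
  calc ∑ T ∈ Finset.range (p + q + 1), (A T ∪ B T).card
      ≤ ∑ T ∈ Finset.range (p + q + 1), ((A T).card + (B T).card) :=
        Finset.sum_le_sum fun T _ ↦ Finset.card_union_le _ _
    _ = ∑ T ∈ Finset.range (p + (q + 1)), (A T).card +
          ∑ T ∈ Finset.range (q + (p + 1)), (B T).card := by
        rw [Finset.sum_add_distrib, Nat.add_assoc p, Nat.add_left_comm p q 1]
    _ ≤ a + (q + 1) * j + (b + (p + 1) * k) :=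
        Nat.add_le_add (sum_range_add_le hA hAj) (sum_range_add_le hB hBk)

theorem card_occupiedCells_le_one {t : BinaryTree α} {T : ℕ} (hT : t.numNodes ≤ T) :
    (occupiedCells t T).card ≤ 1 := by
  refine Finset.card_le_one_iff.2 fun hx hy ↦ ?_
  have := le_of_mem_occupiedCells hx
  have := le_of_mem_occupiedCells hy
  omega

theorem card_heldCells_le_one {t : BinaryTree α} {T : ℕ} (hT : t.numNodes ≤ T) :
    (heldCells t T).card ≤ 1 :=
  (Finset.card_le_card (heldCells_subset_occupiedCells t T)).trans (card_occupiedCells_le_one hT)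

theorem sum_card_occupiedCells_le (t : BinaryTree α) :
    ∑ T ∈ Finset.range t.numNodes, (occupiedCells t T).card ≤ externalPathLength t := by
  induction t with
  | nil => exact Nat.zero_le _
  | node a l r ihl ihr =>
    simp only [numNodes, occupiedCells, externalPathLength, numLeaves_eq_numNodes_succ]
    refine (sum_range_card_union_le (j := 1) (k := 1) ihl (fun T hT ↦ card_occupiedCells_le_one hT)
      (ihr.trans' (Finset.sum_le_sum fun T hT ↦ ?_)) fun T hT ↦ ?_).trans (by omega)
    · rw [if_pos (Finset.mem_range.1 hT)]
      exact Finset.card_image_le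
    · rw [if_neg hT.not_gt, Finset.card_singleton]

theorem sum_card_heldCells_le (t : BinaryTree α) :
    ∑ T ∈ Finset.range t.numNodes, (heldCells t T).card ≤ rightPathLength t := by
  induction t with
  | nil => exact Nat.zero_le _
  | node a l r ihl ihr =>
    simp only [numNodes, heldCells, rightPathLength, numLeaves_eq_numNodes_succ]
    refine (sum_range_card_union_le (j := 1) (k := 0) ihl (fun T hT ↦ card_heldCells_le_one hT)
      (ihr.trans' (Finset.sum_le_sum fun T hT ↦ ?_)) fun T hT ↦ ?_).trans (by omega)
    · rw [if_pos (Finset.mem_range.1 hT)]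
      exact Finset.card_image_le
    · rw [if_neg hT.not_gt, Finset.card_empty]

/-- The tree is the Cartesian tree of `τ` on `[l, r)`, with a largest value of `τ` at the root; the
leaves are the points of `[l, r]`, so the subtree with leaves `[a, b]` has its root in `[a, b)`. -/
theorem exists_mul_externalPathLength_add_rightPathLength_le {β : Type*} [LinearOrder β] {c l r : ℕ}
    (hlr : l ≤ r) {f : ℕ → ℕ} {τ : ℕ → β}
    (hf : ∀ a i b, l ≤ a → i ∈ Finset.Ico a b → b ≤ r → (∀ y ∈ Finset.Ico a b, τ y ≤ τ i) →
      c * (b - a) + (b - i) ≤ f i) :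
    ∃ t : BinaryTree Unit, l + t.numNodes = r ∧
      c * externalPathLength t + rightPathLength t ≤
        ∑ i ∈ Finset.Ico l r, f i + c * t.numNodes := by
  induction hd : r - l using Nat.strong_induction_on generalizing l r with
  | _ d ih =>
    rcases hlr.eq_or_lt with rfl | hlt
    · exact ⟨.nil, by simp [externalPathLength, rightPathLength]⟩
    obtain ⟨i, hi, hmax⟩ := Finset.exists_max_image (Finset.Ico l r) τ (Finset.nonempty_Ico.2 hlt)
    have hroot := hf l i r le_rfl hi le_rfl hmax
    rw [Finset.mem_Ico] at hi
    obtain ⟨u, hu, hfu⟩ := ih (i - l) (by omega) hi.1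
      (fun a j b ha hj hb ↦ hf a j b ha hj (hb.trans hi.2.le)) rfl
    obtain ⟨v, hv, hfv⟩ := ih (r - (i + 1)) (by omega) hi.2
      (fun a j b ha hj hb ↦ hf a j b (by omega) hj hb) rfl
    refine ⟨.node () u v, by rw [numNodes]; omega, ?_⟩
    rw [← Finset.sum_Ico_consecutive f hi.1 hi.2.le, Finset.sum_eq_sum_Ico_succ_bot hi.2]
    have hlength : r - l = u.numNodes + v.numNodes + 1 := by omega
    have hright : r - i = v.numNodes + 1 := by omega
    rw [hlength, hright] at hroot
    simp only [externalPathLength, rightPathLength, numNodes, numLeaves_eq_numNodes_succ]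
    linarith

end Trees

section Automaton

theorem cernyRun_cons {c n q p : ℕ} {x : Bool} (h : cernyStep c n q x = some p) (w : List Bool) :
    cernyRun c n q (x :: w) = cernyRun c n p w := by
  rw [cernyRun, List.foldlM_cons, h]
  rfl

theorem cernyRun_append {c n q p : ℕ} {u : List Bool} (h : cernyRun c n q u = some p)
    (v : List Bool) : cernyRun c n q (u ++ v) = cernyRun c n p v := by
  rw [cernyRun] at h
  rw [cernyRun, List.foldlM_append, h]
  rfl

variable {c m q : ℕ}

theorem cernyStep_false_of_le (h : q ≤ m) : cernyStep c (m + 1 + c) q false = some (q + 1) :=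
  if_pos (by omega)

theorem cernyStep_true_of_le (h : q ≤ m) : cernyStep c (m + 1 + c) q true = some q :=
  if_pos (by omega)

theorem cernyStep_true_of_mem_Ioo (hm : m < q) (hq : q < m + 1 + c) :
    cernyStep c (m + 1 + c) q true = some (q + 1) :=
  (if_neg (by omega)).trans (if_neg hq.ne)

theorem cernyStep_last (x : Bool) : cernyStep c (m + 1 + c) (m + 1 + c) x = some 1 := by
  cases x <;> exact (if_neg (by omega)).trans (if_pos rfl)

theorem cernyStep_cases {q' : ℕ} {x : Bool} (hq : q ≤ m + 1 + c)
    (h : cernyStep c (m + 1 + c) q x = some q') :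
    (q ≤ m ∧ x = false ∧ q' = q + 1) ∨ (q ≤ m ∧ x = true ∧ q' = q) ∨
      (q = m + 1 + c ∧ q' = 1) ∨ (m < q ∧ q < m + 1 + c ∧ x = true ∧ q' = q + 1) := by
  have hm : m + 1 + c - c - 1 = m := by omega
  cases x <;> grind [cernyStep]

theorem cernyRun_replicate_true_of_le (k : ℕ) (h : q ≤ m) :
    cernyRun c (m + 1 + c) q (List.replicate k true) = some q := by
  induction k with
  | zero => rfl
  | succ k ih => rw [List.replicate_succ, cernyRun_cons (cernyStep_true_of_le h), ih]

theorem cernyRun_replicate_true_of_lt {k : ℕ} (hm : m < q) (hk : q + k ≤ m + 1 + c) :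
    cernyRun c (m + 1 + c) q (List.replicate k true) = some (q + k) := by
  induction k generalizing q with
  | zero => rfl
  | succ k ih =>
    rw [List.replicate_succ, cernyRun_cons (cernyStep_true_of_mem_Ioo hm (by omega)),
      ih (by omega) (by omega), Nat.add_right_comm, Nat.add_assoc]

theorem exists_cernyRun_replicate_true (hm : 0 < m) (hq : q ∈ Finset.Icc 1 (m + 1 + c)) :
    ∃ p ∈ Finset.Icc 1 m,
      cernyRun c (m + 1 + c) q (List.replicate (c + 1) true) = some p := by
  rw [Finset.mem_Icc] at hq
  rcases le_or_gt q m with hqm | hqm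
  · exact ⟨q, Finset.mem_Icc.2 ⟨hq.1, hqm⟩, cernyRun_replicate_true_of_le _ hqm⟩
  · obtain ⟨d, hd⟩ := Nat.exists_eq_add_of_le hq.2
    refine ⟨1, Finset.mem_Icc.2 ⟨le_rfl, hm⟩, ?_⟩
    rw [show c + 1 = d + (c - d + 1) by omega, List.replicate_add,
      cernyRun_append (cernyRun_replicate_true_of_lt hqm hd.ge), ← hd, List.replicate_succ,
      cernyRun_cons (cernyStep_last true), cernyRun_replicate_true_of_le _ hm]

/-- The part of a lap dealing with cell `j` when the cells in `P` are occupied and those in `H` are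
held: a letter `a`, then `c` letters `b` to carry a token from state `n - c` to state `n`, then one
more `b` to move it on to state `1` ahead of the next `a`. -/
def cellWord (c : ℕ) (P H : Finset ℕ) (j : ℕ) : List Bool :=
  false :: List.replicate ((if j ∈ P then c else 0) + if j ∈ H then 1 else 0) true

/-- The word dealing with the cells `j - 1, …, 0` in this order. -/
def lapWord (c : ℕ) (P H : Finset ℕ) : ℕ → List Bool
  | 0 => []
  | j + 1 => cellWord c P H j ++ lapWord c P H j

/-- The first `T` laps of the merging schedule of `t`. -/
def scheduleWord {α : Type*} (c : ℕ) (t : BinaryTree α) : ℕ → List Bool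
  | 0 => []
  | T + 1 => scheduleWord c t T ++ lapWord c (occupiedCells t T) (heldCells t T) t.numLeaves

theorem length_lapWord_le (c : ℕ) (P H : Finset ℕ) (j : ℕ) :
    (lapWord c P H j).length ≤ j + (c * P.card + H.card) := by
  have hlength : (lapWord c P H j).length =
      ∑ i ∈ Finset.range j, (1 + ((if i ∈ P then c else 0) + if i ∈ H then 1 else 0)) := by
    induction j with
    | zero => rfl
    | succ j ih =>
      simp only [Finset.sum_range_succ, lapWord, cellWord, List.length_append, List.length_cons,
        List.length_replicate, ih]
      omega
  have hP : (Finset.range j ∩ P).card * c ≤ c * P.card := by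
    rw [Nat.mul_comm]
    exact Nat.mul_le_mul_left c (Finset.card_le_card Finset.inter_subset_right)
  have hH : (Finset.range j ∩ H).card ≤ H.card := Finset.card_le_card Finset.inter_subset_right
  simp only [hlength, Finset.sum_add_distrib, Finset.sum_ite_mem, Finset.sum_const,
    Finset.card_range, smul_eq_mul, mul_one]
  omega

theorem length_scheduleWord_le {α : Type*} (c : ℕ) (t : BinaryTree α) (T : ℕ) :
    (scheduleWord c t T).length ≤ T * t.numLeaves +
      (c * ∑ s ∈ Finset.range T, (occupiedCells t s).card +
        ∑ s ∈ Finset.range T, (heldCells t s).card) := by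
  induction T with
  | zero => exact Nat.zero_le _
  | succ T ih =>
    have hlap := length_lapWord_le c (occupiedCells t T) (heldCells t T) t.numLeaves
    rw [scheduleWord, List.length_append, Finset.sum_range_succ, Finset.sum_range_succ]
    linarith

variable {P H : Finset ℕ}

theorem cernyRun_cellWord_append_of_lt (j : ℕ) (v : List Bool) (h : q < m) :
    cernyRun c (m + 1 + c) q (cellWord c P H j ++ v) = cernyRun c (m + 1 + c) (q + 1) v := by
  rw [cellWord, List.cons_append, cernyRun_cons (cernyStep_false_of_le h.le),
    cernyRun_append (cernyRun_replicate_true_of_le _ h)]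

theorem cernyRun_cellWord_append_last (j : ℕ) (v : List Bool) (hm : 0 < m) :
    cernyRun c (m + 1 + c) (m + 1 + c) (cellWord c P H j ++ v) = cernyRun c (m + 1 + c) 1 v := by
  rw [cellWord, List.cons_append, cernyRun_cons (cernyStep_last false),
    cernyRun_append (cernyRun_replicate_true_of_le _ hm)]

theorem cernyRun_lapWord_of_add_le {j : ℕ} (h : q + j ≤ m) :
    cernyRun c (m + 1 + c) q (lapWord c P H j) = some (q + j) := by
  induction j generalizing q with
  | zero => rfl
  | succ j ih =>
    rw [lapWord, cernyRun_cellWord_append_of_lt _ _ (by omega), ih (by omega), Nat.add_right_comm,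
      Nat.add_assoc]

theorem cernyRun_lapWord_succ_of_mem {x : ℕ} (hx : x < m) (hxP : x ∈ P) (h0 : 0 ∈ H) :
    cernyRun c (m + 1 + c) m (lapWord c P H (x + 1)) = some (dropUnlessMem H x + 1) := by
  have htop : cernyRun c (m + 1 + c) (m + 1) (List.replicate c true) = some (m + 1 + c) :=
    cernyRun_replicate_true_of_lt m.lt_succ_self le_rfl
  rw [lapWord, cellWord, List.cons_append, cernyRun_cons (cernyStep_false_of_le le_rfl),
    if_pos hxP, List.replicate_add, List.append_assoc, cernyRun_append htop, dropUnlessMem]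
  split_ifs with hxH
  · rw [List.replicate_one, List.singleton_append, cernyRun_cons (cernyStep_last true),
      cernyRun_lapWord_of_add_le (by omega), Nat.add_comm]
  · obtain ⟨y, rfl⟩ := Nat.exists_eq_add_one_of_ne_zero fun h : x = 0 ↦ hxH (h ▸ h0)
    rw [List.replicate_zero, List.nil_append, lapWord,
      cernyRun_cellWord_append_last _ _ (by omega), cernyRun_lapWord_of_add_le (by omega),
      Nat.add_comm, Nat.add_sub_cancel]

theorem cernyRun_lapWord_of_mem {i j x : ℕ} (hij : i + j = m) (hxj : x < j) (hxP : x ∈ P)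
    (h0 : 0 ∈ H) :
    cernyRun c (m + 1 + c) (x + 1 + i) (lapWord c P H j) = some (dropUnlessMem H x + 1) := by
  induction j generalizing i with
  | zero => omega
  | succ j ih =>
    rcases Nat.lt_succ_iff_lt_or_eq.1 hxj with hlt | rfl
    · rw [lapWord, cernyRun_cellWord_append_of_lt _ _ (by omega), Nat.add_assoc _ i,
        ih (by omega) hlt]
    · rw [Nat.add_comm (x + 1), hij, cernyRun_lapWord_succ_of_mem (by omega) hxP h0]

theorem exists_cernyRun_scheduleWord {α : Type*} (c : ℕ) (t : BinaryTree α) (T : ℕ)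
    (hq : q ∈ Finset.Icc 1 t.numLeaves) :
    ∃ x ∈ occupiedCells t T,
      cernyRun c (t.numLeaves + 1 + c) q (scheduleWord c t T) = some (x + 1) := by
  have ht := t.numLeaves_eq_numNodes_succ
  rw [Finset.mem_Icc] at hq
  induction T with
  | zero =>
    refine ⟨q - 1, mem_occupiedCells_zero (by omega), ?_⟩
    rw [Nat.sub_add_cancel hq.1]
    rfl
  | succ T ih =>
    obtain ⟨x, hx, hrun⟩ := ih
    refine ⟨_, dropUnlessMem_mem_occupiedCells hx, ?_⟩
    have hxt := le_of_mem_occupiedCells hx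
    rw [scheduleWord, cernyRun_append hrun]
    exact cernyRun_lapWord_of_mem (Nat.zero_add _) (by omega) hx (zero_mem_heldCells t T)

theorem isSync_scheduleWord {α : Type*} (c : ℕ) (t : BinaryTree α) :
    IsSync c (t.numLeaves + 1 + c)
      (List.replicate (c + 1) true ++ scheduleWord c t t.numNodes) := by
  refine ⟨1, fun q hq ↦ ?_⟩
  obtain ⟨p, hp, hrunp⟩ := exists_cernyRun_replicate_true t.numLeaves_pos hq
  obtain ⟨x, hx, hrunx⟩ := exists_cernyRun_scheduleWord c t t.numNodes hp
  have hx0 : x = 0 := by simpa using le_of_mem_occupiedCells hx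
  rw [cernyRun_append hrunp, hrunx, hx0]

theorem IsSync.resetThreshold_le {c n : ℕ} {w : List Bool} (hw : IsSync c n w) :
    resetThreshold c n ≤ w.length :=
  Nat.sInf_le ⟨w, rfl, hw⟩

theorem IsSync.exists_length_eq_resetThreshold {c n : ℕ} {w : List Bool} (hw : IsSync c n w) :
    ∃ v : List Bool, v.length = resetThreshold c n ∧ IsSync c n v :=
  Nat.sInf_mem (s := {L : ℕ | ∃ w : List Bool, w.length = L ∧ IsSync c n w}) ⟨_, w, rfl, hw⟩

theorem resetThreshold_le_of_tree {α : Type*} (c : ℕ) (t : BinaryTree α) :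
    resetThreshold c (t.numLeaves + 1 + c) ≤
      c + 1 + t.numNodes * t.numLeaves + (c * externalPathLength t + rightPathLength t) := by
  have hschedule := length_scheduleWord_le c t t.numNodes
  have hoccupied := Nat.mul_le_mul_left c (sum_card_occupiedCells_le t)
  have hheld := sum_card_heldCells_le t
  have hlength := (isSync_scheduleWord c t).resetThreshold_le
  rw [List.length_append, List.length_replicate] at hlength
  omega

end Automaton

section LowerBound

theorem count_false_add_count_true (x : ℕ → Bool) (L : ℕ) :
    Nat.count (fun s ↦ x s = false) L + Nat.count (fun s ↦ x s = true) L = L := by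
  rw [Nat.count_eq_card_filter_range, Nat.count_eq_card_filter_range]
  simpa using (Finset.range L).card_filter_add_card_filter_not fun s ↦ x s = false

/-- An infinite run of one token from a state in `{1, …, m}`, reading the letters `x 0, x 1, …`, in
the automaton with `m + 1 + c` states. Laps are counted from `startLap`, which places the tokens of
several runs on a common line. -/
structure Trajectory (c m : ℕ) (x : ℕ → Bool) where
  state : ℕ → ℕ
  startLap : ℕ
  state_zero_mem : state 0 ∈ Finset.Icc 1 m
  step : ∀ t, cernyStep c (m + 1 + c) (state t) (x t) = some (state (t + 1))

namespace Trajectory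

variable {c m : ℕ} {x : ℕ → Bool} (p q : Trajectory c m x)

/-- How often the token has moved from the last state to state `1` before time `t`. -/
def wraps (t : ℕ) : ℕ := Nat.count (fun s ↦ p.state s = m + 1 + c) t

/-- How often the token has been moved by `b` from the last state to state `1` before time `t`. -/
def kicks (t : ℕ) : ℕ := Nat.count (fun s ↦ x s = true ∧ p.state s = m + 1 + c) t

/-- How many letters `b` have met the token in the states `m + 1, …, m + 1 + c` before time `t`. -/
def climbs (t : ℕ) : ℕ := Nat.count (fun s ↦ x s = true ∧ m < p.state s) t

/-- The position of the token on the line obtained by unrolling the cycle of length `m + 1` that is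
left after identifying the states `m + 1, …, m + 1 + c`. -/
def position (t : ℕ) : ℕ := min (p.state t) (m + 1) + (m + 1) * (p.startLap + p.wraps t)

theorem wraps_succ (t : ℕ) :
    p.wraps (t + 1) = p.wraps t + if p.state t = m + 1 + c then 1 else 0 :=
  Nat.count_succ _ t

theorem kicks_le_wraps (t : ℕ) : p.kicks t ≤ p.wraps t :=
  Nat.count_mono_left fun _ _ h ↦ h.2

theorem state_mem (t : ℕ) : p.state t ∈ Finset.Icc 1 (m + 1 + c) := by
  induction t with
  | zero => exact Finset.Icc_subset_Icc_right (by omega) p.state_zero_mem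
  | succ t ih =>
    rw [Finset.mem_Icc] at ih ⊢
    have := cernyStep_cases ih.2 (p.step t)
    omega

theorem state_succ_cases (t : ℕ) :
    (p.state t ≤ m ∧ x t = false ∧ p.state (t + 1) = p.state t + 1) ∨
      (p.state t ≤ m ∧ x t = true ∧ p.state (t + 1) = p.state t) ∨
      (p.state t = m + 1 + c ∧ p.state (t + 1) = 1) ∨
      (m < p.state t ∧ p.state t < m + 1 + c ∧ x t = true ∧ p.state (t + 1) = p.state t + 1) :=
  cernyStep_cases (Finset.mem_Icc.1 (p.state_mem t)).2 (p.step t)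

theorem position_zero : p.position 0 = p.state 0 + (m + 1) * p.startLap := by
  have := (Finset.mem_Icc.1 p.state_zero_mem).2
  rw [position, min_eq_left (by omega)]
  rfl

theorem position_succ (t : ℕ) :
    p.position (t + 1) = p.position t +
      ((if x t = true ∧ p.state t = m + 1 + c then 1 else 0) + if x t = false then 1 else 0) := by
  rw [position, position, wraps_succ]
  grind [p.state_succ_cases t]

theorem position_eq_add (t : ℕ) :
    p.position t = p.position 0 + p.kicks t + Nat.count (fun s ↦ x s = false) t := by
  induction t with
  | zero => rfl
  | succ t ih =>
    rw [position_succ, ih, kicks, kicks, Nat.count_succ, Nat.count_succ]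
    omega

theorem climbs_eq_add (t : ℕ) :
    p.climbs t = c * p.wraps t + (p.state t - (m + 1)) + p.kicks t := by
  induction t with
  | zero =>
    have := (Finset.mem_Icc.1 p.state_zero_mem).2
    rw [climbs, wraps, kicks, Nat.count_zero, Nat.count_zero, Nat.count_zero,
      Nat.sub_eq_zero_of_le (by omega)]
    rfl
  | succ t ih =>
    rw [climbs, kicks] at ih ⊢
    rw [Nat.count_succ, Nat.count_succ, ih, wraps_succ]
    grind [p.state_succ_cases t]

theorem position_le_succ (t : ℕ) : p.position t ≤ p.position (t + 1) :=
  p.position_succ t ▸ Nat.le_add_right _ _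

theorem position_succ_le (t : ℕ) : p.position (t + 1) ≤ p.position t + 1 := by
  grind [p.position_succ t]

variable {p q}

theorem state_eq_of_le {s t : ℕ} (hst : s ≤ t) (h : p.state s = q.state s) :
    p.state t = q.state t := by
  induction t, hst using Nat.le_induction with
  | base => exact h
  | succ t _ ih => exact Option.some_injective _ (by rw [← p.step, ← q.step, ih])

theorem position_add_eq_of_state_eq {s t : ℕ} (hst : s ≤ t) (h : p.state s = q.state s) :
    p.position t + q.position s = q.position t + p.position s := by
  induction t, hst using Nat.le_induction with
  | base => exact Nat.add_comm _ _
  | succ t hst ih =>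
    rw [position_succ, position_succ, state_eq_of_le hst h]
    omega

theorem state_eq_of_lt {t : ℕ} (hp : m < p.state t) (hq : m < q.state t) :
    p.state t = q.state t := by
  induction t with
  | zero => exact absurd (Finset.mem_Icc.1 p.state_zero_mem).2 hp.not_ge
  | succ t ih =>
    have hcases := p.state_succ_cases t
    have hcases' := q.state_succ_cases t
    cases hx : x t <;>
      simp only [hx, reduceCtorEq, false_and, and_false, true_and, false_or, or_false]
        at hcases hcases' <;> omega

theorem min_state_eq_of_position_eq {t : ℕ} (h : p.position t = q.position t) :
    min (p.state t) (m + 1) = min (q.state t) (m + 1) := by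
  have hmod (r : Trajectory c m x) :
      (r.position t - 1) % (m + 1) + 1 = min (r.state t) (m + 1) := by
    have := Finset.mem_Icc.1 (r.state_mem t)
    rw [position, Nat.sub_add_comm (by omega), Nat.add_mul_mod_self_left,
      Nat.mod_eq_of_lt (by omega)]
    omega
  rw [← hmod p, ← hmod q, h]

theorem state_eq_of_position_eq {t : ℕ} (h : p.position t = q.position t) :
    p.state t = q.state t := by
  have hmin := min_state_eq_of_position_eq h
  by_cases hp : m < p.state t
  · exact state_eq_of_lt hp (by omega)
  · omega

theorem position_eq_of_le {s t : ℕ} (hst : s ≤ t) (h : p.position s = q.position s) :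
    p.position t = q.position t := by
  have := position_add_eq_of_state_eq hst (state_eq_of_position_eq h)
  omega

theorem position_le_of_le {s t : ℕ} (hst : s ≤ t) (h : p.position s ≤ q.position s) :
    p.position t ≤ q.position t := by
  induction t, hst using Nat.le_induction with
  | base => exact h
  | succ t _ ih =>
    rcases ih.lt_or_eq with hlt | heq
    · exact (p.position_succ_le t).trans ((Nat.succ_le_of_lt hlt).trans (q.position_le_succ t))
    · exact (position_eq_of_le t.le_succ heq).le

theorem position_add_le_of_lt {t : ℕ} (hstate : p.state t = q.state t)
    (h : p.position t < q.position t) : p.position t + (m + 1) ≤ q.position t := by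
  rw [position, position, hstate] at h ⊢
  have hlap := Nat.lt_of_mul_lt_mul_left (Nat.lt_of_add_lt_add_left h)
  have := Nat.mul_le_mul_left (m + 1) (Nat.succ_le_of_lt hlap)
  rw [Nat.mul_succ] at this
  omega

/-- The first time at which two tokens have the same position, or `L` if there is none before. -/
noncomputable def mergeTime (p q : Trajectory c m x) (L : ℕ) : ℕ :=
  sInf {t | t = L ∨ p.position t = q.position t}

theorem mergeTime_le (L : ℕ) : mergeTime p q L ≤ L :=
  Nat.sInf_le (Or.inl rfl)

theorem position_ne_of_lt_mergeTime {t L : ℕ} (ht : t < mergeTime p q L) :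
    p.position t ≠ q.position t :=
  fun h ↦ Nat.notMem_of_lt_sInf ht (Or.inr h)

theorem mergeTime_eq_or (p q : Trajectory c m x) (L : ℕ) :
    mergeTime p q L = L ∨
      p.position (mergeTime p q L) = q.position (mergeTime p q L) :=
  Nat.sInf_mem (s := {t | t = L ∨ p.position t = q.position t}) ⟨L, Or.inl rfl⟩

theorem mergeTime_eq_of_position_ne {L : ℕ} (h : p.position L ≠ q.position L) :
    mergeTime p q L = L :=
  (mergeTime_eq_or p q L).resolve_right fun hm ↦ h (position_eq_of_le (mergeTime_le L) hm)

theorem position_eq_of_mergeTime_le {t L : ℕ} (h : p.position L = q.position L)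
    (ht : mergeTime p q L ≤ t) : p.position t = q.position t :=
  position_eq_of_le ht ((mergeTime_eq_or p q L).elim (fun hL ↦ by rwa [hL]) id)

/-- A family of trajectories started from states `1, …, m` in lap `0`, then from states `1, …, m` in
lap `1`, and so on: the tokens on the universal cover of the cycle, from left to right. -/
def IsUnrolling (p : ℕ → Trajectory c m x) : Prop :=
  ∀ j, (p j).state 0 = j % m + 1 ∧ (p j).startLap = j / m

namespace IsUnrolling

variable {p : ℕ → Trajectory c m x}

theorem position_zero (hp : IsUnrolling p) (j : ℕ) : (p j).position 0 = j + j / m + 1 := by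
  rw [Trajectory.position_zero, (hp j).1, (hp j).2]
  have := Nat.mod_add_div j m
  linarith

theorem position_mono (hp : IsUnrolling p) {i j : ℕ} (hij : i ≤ j) (t : ℕ) :
    (p i).position t ≤ (p j).position t := by
  refine position_le_of_le t.zero_le ?_
  rw [hp.position_zero, hp.position_zero]
  have := Nat.div_le_div_right (c := m) hij
  omega

theorem position_add_eq (hp : IsUnrolling p) (hm : 0 < m) (j t : ℕ) :
    (p (j + m)).position t = (p j).position t + (m + 1) := by
  have hstate : (p (j + m)).state 0 = (p j).state 0 := by
    rw [(hp _).1, (hp _).1, Nat.add_mod_right]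
  have h := position_add_eq_of_state_eq t.zero_le hstate
  rw [hp.position_zero, hp.position_zero, Nat.add_div_right _ hm] at h
  omega

theorem sub_le_wraps_and_kicks (hp : IsUnrolling p) {a b i t : ℕ} (hai : a ≤ i) (hib : i ≤ b)
    (h : (p a).position t = (p b).position t) :
    b - a ≤ (p i).wraps t ∧ b - i ≤ (p i).kicks t := by
  have hia : (p i).position t = (p a).position t :=
    le_antisymm ((hp.position_mono hib t).trans h.ge) (hp.position_mono hai t)
  have hlap : (p i).startLap + (p i).wraps t = (p a).startLap + (p a).wraps t := by
    have hmin := min_state_eq_of_position_eq hia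
    rw [position, position, hmin] at hia
    exact Nat.eq_of_mul_eq_mul_left m.succ_pos (Nat.add_left_cancel hia)
  rw [(hp i).2, (hp a).2] at hlap
  have ha := (p a).position_eq_add t
  have hi := (p i).position_eq_add t
  have hb := (p b).position_eq_add t
  rw [hp.position_zero] at ha hi hb
  have := (p a).kicks_le_wraps t
  have := Nat.div_le_div_right (c := m) hai
  have := Nat.div_le_div_right (c := m) hib
  omega

theorem mul_sub_add_sub_le_climbs (hp : IsUnrolling p) {a b i t : ℕ} (hai : a ≤ i) (hib : i ≤ b)
    (h : (p a).position t = (p b).position t) :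
    c * (b - a) + (b - i) ≤ (p i).climbs t := by
  obtain ⟨hwraps, hkicks⟩ := hp.sub_le_wraps_and_kicks hai hib h
  have := Nat.mul_le_mul_left c hwraps
  rw [climbs_eq_add]
  omega

theorem exists_position_eq (hp : IsUnrolling p) {r t : ℕ} (hm : r + 1 = m)
    (hsync : ∀ i j, (p i).state t = (p j).state t) :
    ∃ k, (p k).position t = (p (k + r)).position t := by
  have hex : ∃ k, (p k).position t ≠ (p 0).position t := by
    refine ⟨0 + m, ?_⟩
    rw [hp.position_add_eq (by omega)]
    omega
  obtain ⟨k, hk, hfirst⟩ := Nat.findX hex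
  rcases k with _ | k
  · exact absurd rfl hk
  have hk' : (p k).position t = (p 0).position t := not_not.1 (hfirst k k.lt_succ_self)
  have hjump := position_add_le_of_lt (hsync 0 (k + 1))
    ((hp.position_mono (k + 1).zero_le t).lt_of_ne hk.symm)
  have hlap := hp.position_add_eq (by omega) k t
  refine ⟨k + 1, (hp.position_mono (Nat.le_add_right _ r) t).antisymm ?_⟩
  rw [Nat.add_right_comm, Nat.add_assoc, hm, hlap, hk']
  exact hjump

theorem position_eq_of_mem_Icc (hp : IsUnrolling p) {a b i j t : ℕ}
    (h : (p a).position t = (p b).position t) (hi : i ∈ Finset.Icc a b)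
    (hj : j ∈ Finset.Icc a b) : (p i).position t = (p j).position t := by
  rw [Finset.mem_Icc] at hi hj
  have := hp.position_mono hi.1 t
  have := hp.position_mono hi.2 t
  have := hp.position_mono hj.1 t
  have := hp.position_mono hj.2 t
  omega

theorem position_eq_of_forall_mergeTime_le (hp : IsUnrolling p) {a b t L : ℕ} (hab : a ≤ b)
    (h : (p a).position L = (p b).position L)
    (ht : ∀ i ∈ Finset.Ico a b, mergeTime (p i) (p (i + 1)) L ≤ t) :
    (p a).position t = (p b).position t := by
  induction b, hab using Nat.le_induction with
  | base => rfl
  | succ b hab ih =>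
    have hb : b ∈ Finset.Icc a (b + 1) := Finset.mem_Icc.2 ⟨hab, b.le_succ⟩
    have hlast := hp.position_eq_of_mem_Icc h hb (Finset.right_mem_Icc.2 (hab.trans b.le_succ))
    refine (ih (h.trans hlast.symm) fun i hi ↦ ht i ?_).trans
      (position_eq_of_mergeTime_le hlast (ht b (Finset.mem_Ico.2 ⟨hab, b.lt_succ_self⟩)))
    exact Finset.Ico_subset_Ico_right b.le_succ hi

theorem state_ne_of_lt_mergeTime (hp : IsUnrolling p) {i j s L : ℕ} (hij : i < j)
    (h : (p i).position L = (p j).position L) (hs : s < mergeTime (p i) (p (i + 1)) L) :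
    (p i).state s ≠ (p j).state s := by
  intro hstate
  have hshift := position_add_eq_of_state_eq (hs.le.trans (mergeTime_le L)) hstate
  exact position_ne_of_lt_mergeTime hs (hp.position_eq_of_mem_Icc (by omega)
    (Finset.left_mem_Icc.2 hij.le) (Finset.mem_Icc.2 ⟨i.le_succ, hij⟩))

/-- Distinct tokens that have not merged never climb on the same letter `b`. -/
theorem sum_climbs_mergeTime_le_count (hp : IsUnrolling p) {k r L : ℕ}
    (h : (p k).position L = (p r).position L) :
    ∑ j ∈ Finset.Ico k (r + 1), (p j).climbs (mergeTime (p j) (p (j + 1)) L) ≤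
      Nat.count (fun s ↦ x s = true) L := by
  let climbTimes (j : ℕ) : Finset ℕ :=
    (Finset.range (mergeTime (p j) (p (j + 1)) L)).filter fun s ↦ x s = true ∧ m < (p j).state s
  have hdisjoint : (Finset.Ico k (r + 1) : Set ℕ).PairwiseDisjoint climbTimes := by
    intro i hi j hj hij
    wlog hlt : i < j generalizing i j
    · exact (this hj hi hij.symm (hij.lt_or_gt.resolve_left hlt)).symm
    rw [Finset.mem_coe, Finset.mem_Ico] at hi hj
    have hpos := hp.position_eq_of_mem_Icc h (Finset.mem_Icc.2 ⟨hi.1, by omega⟩)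
      (Finset.mem_Icc.2 ⟨hj.1, by omega⟩)
    refine Finset.disjoint_left.2 fun s hsi hsj ↦ ?_
    obtain ⟨hs, -, hclimb⟩ := Finset.mem_filter.1 hsi
    obtain ⟨-, -, hclimb'⟩ := Finset.mem_filter.1 hsj
    exact hp.state_ne_of_lt_mergeTime hlt hpos (Finset.mem_range.1 hs)
      (state_eq_of_lt hclimb hclimb')
  calc ∑ j ∈ Finset.Ico k (r + 1), (p j).climbs (mergeTime (p j) (p (j + 1)) L)
      = ∑ j ∈ Finset.Ico k (r + 1), (climbTimes j).card :=
        Finset.sum_congr rfl fun j _ ↦ Nat.count_eq_card_filter_range _ _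
    _ = ((Finset.Ico k (r + 1)).biUnion climbTimes).card := (Finset.card_biUnion hdisjoint).symm
    _ ≤ ((Finset.range L).filter fun s ↦ x s = true).card := by
        refine Finset.card_le_card (Finset.biUnion_subset.2 fun j _ s hs ↦ ?_)
        rw [Finset.mem_filter, Finset.mem_range] at hs ⊢
        exact ⟨hs.1.trans_le (mergeTime_le L), hs.2.1⟩
    _ = Nat.count (fun s ↦ x s = true) L := (Nat.count_eq_card_filter_range _ _).symm

theorem mul_self_le_count (hp : IsUnrolling p) {k r t : ℕ} (hm : r + 1 = m)
    (h : (p k).position t = (p (k + r)).position t) :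
    r * r ≤ Nat.count (fun s ↦ x s = false) t := by
  have hwraps := (hp.sub_le_wraps_and_kicks le_rfl (k.le_add_right r) h).1
  rw [Nat.add_sub_cancel_left] at hwraps
  have hposition := (p k).position_eq_add t
  have hkicks := (p k).kicks_le_wraps t
  have hstate := (Finset.mem_Icc.1 ((p k).state_mem t)).1
  have hstart := (Finset.mem_Icc.1 (p k).state_zero_mem).2
  rw [Trajectory.position_zero, position] at hposition
  have hmin : 1 ≤ min ((p k).state t) (m + 1) := by omega
  subst hm
  nlinarith

theorem exists_tree_le (hp : IsUnrolling p) {r L : ℕ} (hm : r + 1 = m)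
    (hsync : ∀ i j, (p i).state L = (p j).state L) :
    ∃ t : BinaryTree Unit, t.numNodes = r ∧
      c * externalPathLength t + rightPathLength t + r * r ≤ L := by
  obtain ⟨k, hk⟩ := hp.exists_position_eq hm hsync
  obtain ⟨t, ht, htree⟩ := exists_mul_externalPathLength_add_rightPathLength_le
    (c := c) (k.le_add_right r)
    (f := fun j ↦ (p j).climbs (mergeTime (p j) (p (j + 1)) L))
    (τ := fun j ↦ mergeTime (p j) (p (j + 1)) L) (by
      intro a i b hka hi hbr hmax
      have hab := Finset.mem_Ico.1 hi
      refine hp.mul_sub_add_sub_le_climbs hab.1 hab.2.le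
        (hp.position_eq_of_forall_mergeTime_le (by omega) ?_ hmax)
      exact hp.position_eq_of_mem_Icc hk (Finset.mem_Icc.2 (by omega))
        (Finset.mem_Icc.2 (by omega)))
  have hlast : mergeTime (p (k + r)) (p (k + r + 1)) L = L := by
    refine mergeTime_eq_of_position_ne ?_
    rw [Nat.add_assoc, hm, hp.position_add_eq (by omega)]
    omega
  have hclimbs := hp.sum_climbs_mergeTime_le_count hk
  rw [Finset.sum_Ico_succ_top (k.le_add_right r), hlast] at hclimbs
  have hclimb := hp.mul_sub_add_sub_le_climbs (k.le_add_right r) le_rfl hk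
  have hfalse := hp.mul_self_le_count hm hk
  have hcount := count_false_add_count_true x L
  rw [Nat.add_left_cancel ht] at htree
  rw [Nat.add_sub_cancel_left] at hclimb
  exact ⟨t, Nat.add_left_cancel ht, by omega⟩

end IsUnrolling

end Trajectory

theorem exists_forall_cernyStep_eq_some {c n q q' : ℕ} {w : List Bool}
    (h : cernyRun c n q w = some q') :
    ∃ s : ℕ → ℕ, s 0 = q ∧ s w.length = q' ∧
      ∀ t, cernyStep c n (s t) (w.getD t true) = some (s (t + 1)) := by
  induction w generalizing q with
  | nil =>
    refine ⟨fun t ↦ (fun p ↦ (cernyStep c n p true).getD 0)^[t] q, rfl, Option.some_injective _ h,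
      fun t ↦ ?_⟩
    obtain ⟨p', hp'⟩ : ∃ p', cernyStep c n ((fun p ↦ (cernyStep c n p true).getD 0)^[t] q) true =
      some p' := by
      rw [cernyStep]
      split_ifs <;> exact ⟨_, rfl⟩
    simp only [List.getD_nil, Function.iterate_succ_apply', hp', Option.getD_some]
  | cons y w ih =>
    rw [cernyRun, List.foldlM_cons] at h
    obtain ⟨p, hp, hrun⟩ := Option.bind_eq_some_iff.1 h
    obtain ⟨s, h0, hlength, hstep⟩ := ih hrun
    refine ⟨fun t ↦ t.casesOn q s, rfl, hlength, fun t ↦ ?_⟩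
    cases t with
    | zero => rwa [← h0] at hp
    | succ t => exact hstep t

theorem exists_tree_le_resetThreshold (c r : ℕ) :
    ∃ t : BinaryTree Unit, t.numNodes = r ∧
      c * externalPathLength t + rightPathLength t + r * r ≤ resetThreshold c (r + 1 + 1 + c) := by
  obtain ⟨t₀, ht₀⟩ := exists_numNodes_eq () r
  have hsync₀ := isSync_scheduleWord c t₀
  rw [t₀.numLeaves_eq_numNodes_succ, ht₀] at hsync₀
  obtain ⟨w, hlength, qs, hw⟩ := hsync₀.exists_length_eq_resetThreshold
  have hmem (j : ℕ) : j % (r + 1) + 1 ∈ Finset.Icc 1 (r + 1) :=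
    Finset.mem_Icc.2 ⟨Nat.le_add_left _ _, Nat.mod_lt _ r.succ_pos⟩
  choose s hs₀ hs hstep using fun j ↦ exists_forall_cernyStep_eq_some
    (hw _ (Finset.Icc_subset_Icc_right (by omega) (hmem j)))
  let p (j : ℕ) : Trajectory c (r + 1) (fun t ↦ w.getD t true) :=
    ⟨s j, j / (r + 1), (hs₀ j).symm ▸ hmem j, hstep j⟩
  have hp : Trajectory.IsUnrolling p := fun j ↦ ⟨hs₀ j, rfl⟩
  rw [← hlength]
  exact hp.exists_tree_le rfl fun i j ↦ (hs i).trans (hs j).symm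

end LowerBound

theorem local_max_lt_half_general {n c : ℕ} (hc : c + 3 ≤ n)
    (h : resetThreshold c n ≤ resetThreshold (c + 1) n) : 2 * (c + 1) < n := by
  by_contra! hn
  obtain ⟨r, rfl⟩ := Nat.exists_eq_add_of_le' hc
  obtain ⟨t, ht, hlower⟩ := exists_tree_le_resetThreshold c (r + 1)
  obtain ⟨s, hs, hexternal, hright⟩ := exists_remove_deepest_leaf t (by omega)
  obtain rfl : s.numNodes = r := by omega
  have hupper := resetThreshold_le_of_tree (c + 1) s
  rw [s.numLeaves_eq_numNodes_succ,
    show s.numNodes + 1 + 1 + (c + 1) = s.numNodes + (c + 3) by ring] at hupper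
  rw [show s.numNodes + 1 + 1 + 1 + c = s.numNodes + (c + 3) by ring, ← hexternal] at hlower
  have hdepth : externalPathLength s + t.height + 1 ≤ (c + 1) * t.height :=
    calc externalPathLength s + t.height + 1
        = externalPathLength t := hexternal
      _ ≤ t.numLeaves * t.height := externalPathLength_le_numLeaves_mul_height t
      _ ≤ (c + 1) * t.height :=
        Nat.mul_le_mul_right _ (by rw [t.numLeaves_eq_numNodes_succ]; omega)
  linarith

/-- **Proposition.** Let `n ≥ 6` and let `c'` with `1 ≤ c' ≤ n-3` be a local maximum of
`c ↦ r(C_n^c)`, i.e. `r(C_n^{c'-1}) ≤ r(C_n^{c'})` and `r(C_n^{c'+1}) ≤ r(C_n^{c'})`.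
Then `c' < n/2`. -/
theorem local_max_lt_half (n c' : ℕ) (hn : 6 ≤ n) (hc1 : 1 ≤ c') (hc2 : c' ≤ n - 3)
    (hleft : resetThreshold (c' - 1) n ≤ resetThreshold c' n)
    (hright : resetThreshold (c' + 1) n ≤ resetThreshold c' n) :
    2 * c' < n := by
  obtain ⟨c, rfl⟩ := Nat.exists_eq_add_of_le' hc1
  exact local_max_lt_half_general (by omega) hleft
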